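/- arXiv:2201.08632 — 2 statements merged into one kernel-verified Lean document; each statement's English description precedes it below -/
import Mathlib

section
/- Let q be a prime power and let ν, b, c, t be positive integers with 2ν ≥ 2b + c + 1, ν > b ≥ t + 1, and c ≥ t. For x ∈ {t, t+1, …, b} define g_{b,c}(x) = [x choose t]_q · [c−t+1 choose 1]_q^{x−t} · N'(x;b;2ν). Then g_{b,c} is strictly decreasing on {t, …, b}, i.e., g_{b,c}(x+1) < g_{b,c}(x) for every x ∈ {t, …, b−1}. -/
open Finset Module

noncomputable section

/-- Gaussian binomial coefficient `[n choose k]_q` as a rational number. -/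
def gaussBinom (q n k : ℕ) : ℚ :=
  ∏ i ∈ Finset.range k, ((q : ℚ) ^ ((n : ℤ) - i) - 1) / ((q : ℚ) ^ ((k : ℤ) - i) - 1)

/-- `N'(a; m; 2ν)`, the number of `m`-dim totally isotropic subspaces containing
a fixed `a`-dim one. -/
def Nprime (q a m ν : ℕ) : ℚ :=
  ∏ i ∈ Finset.Icc 1 (m - a), ((q : ℚ) ^ (2 * ((ν : ℤ) - m + i)) - 1) / ((q : ℚ) ^ (i : ℤ) - 1)

variable {K V : Type*} [Field K] [AddCommGroup V] [Module K V]

/-- A subspace is totally isotropic w.r.t. the bilinear form `f`. -/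
def TotallyIsotropic (f : V →ₗ[K] V →ₗ[K] K) (W : Submodule K V) : Prop :=
  ∀ x ∈ W, ∀ y ∈ W, f x y = 0

/-- `polar f m` = `𝒫_m`, the set of `m`-dimensional totally isotropic subspaces. -/
def polar (f : V →ₗ[K] V →ₗ[K] K) (m : ℕ) : Set (Submodule K V) :=
  {W | TotallyIsotropic f W ∧ finrank K W = m}

/-- `X` is a `t`-cover of the family `ℱ`. -/
def IsTCover (f : V →ₗ[K] V →ₗ[K] K) (t : ℕ) (ℱ : Set (Submodule K V))
    (X : Submodule K V) : Prop :=
  TotallyIsotropic f X ∧ ∀ F ∈ ℱ, t ≤ finrank K ↥(X ⊓ F)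

/-- `τ_t(ℱ)`, the minimum dimension of a `t`-cover of `ℱ`. -/
def tauCover (f : V →ₗ[K] V →ₗ[K] K) (t : ℕ) (ℱ : Set (Submodule K V)) : ℕ :=
  sInf {x | ∃ X, IsTCover f t ℱ X ∧ finrank K ↥X = x}

def C1 (f : V →ₗ[K] V →ₗ[K] K) (M T : Submodule K V) (m t : ℕ) : Set (Submodule K V) :=
  {F | F ∈ polar f m ∧ T ≤ F ∧ t + 1 ≤ finrank K ↥(F ⊓ M)}

def C2 (f : V →ₗ[K] V →ₗ[K] K) (M T : Submodule K V) (m : ℕ) : Set (Submodule K V) :=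
  {F | F ∈ polar f m ∧ T ≤ F} ∪ {F | F ∈ polar f m ∧ F ≤ M}

def C3 (f : V →ₗ[K] V →ₗ[K] K) (S : Submodule K V) (m : ℕ) : Set (Submodule K V) :=
  {F | F ∈ polar f m ∧ S ≤ F}

def C4 (f : V →ₗ[K] V →ₗ[K] K) (S : Submodule K V) (m t : ℕ) : Set (Submodule K V) :=
  {F | F ∈ polar f m ∧ t ≤ finrank K ↥(F ⊓ S)}

def s0 (q ν m s t : ℕ) : ℚ :=
  gaussBinom q (s - t) 1 * Nprime q (t + 1) m ν - q * gaussBinom q (s - t) 2 * Nprime q (t + 2) m ν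

/-!
Write `g x` for the quantity in the theorem. Consecutive values have the ratio
`g (x + 1) / g x = (q ^ (x + 1) - 1) (q ^ n - 1) (q ^ (b - x) - 1) /
  ((q ^ (x + 1 - t) - 1) (q - 1) (q ^ (2 (ν - x)) - 1))`, where `n = c - t + 1`.
Since `q ≥ 2`, the first factor of the numerator is less than
`q ^ (t + 1) (q ^ (x + 1 - t) - 1)`, while
`q ^ (t + 1) (q ^ n - 1) (q ^ (b - x) - 1) ≤ q ^ (t + 1 + n + (b - x)) - 1`,
so the ratio is below `1` as soon as `t + 1 + n + (b - x) ≤ 2 (ν - x)`.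
-/

section PowerInequalities

variable {R : Type*} [CommRing R] [LinearOrder R] [IsStrictOrderedRing R] {q : R}

lemma pow_add_sub_one_lt_pow_mul (hq : 2 ≤ q) {y : ℕ} (hy : y ≠ 0) (t : ℕ) :
    q ^ (y + t) - 1 < q ^ (t + 1) * (q ^ y - 1) := by
  have hmono : q ^ (t + 1) ≤ q ^ (y + t) := pow_le_pow_right₀ (by linarith) (by lia)
  have hdouble : 2 * q ^ (y + t) ≤ q * q ^ (y + t) :=
    mul_le_mul_of_nonneg_right hq (pow_nonneg (by linarith) _)
  calc q ^ (y + t) - 1 < 2 * q ^ (y + t) - q ^ (t + 1) := by linarith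
    _ ≤ q * q ^ (y + t) - q ^ (t + 1) := by linarith
    _ = q ^ (t + 1) * (q ^ y - 1) := by ring

lemma pow_mul_pow_sub_one_le (hq : 1 ≤ q) (k n : ℕ) : q ^ k * (q ^ n - 1) ≤ q ^ (k + n) - 1 := by
  rw [mul_sub, mul_one, ← pow_add]
  exact sub_le_sub_left (one_le_pow₀ hq) _

lemma pow_sub_one_mul_pow_sub_one_le (hq : 1 ≤ q) (m n : ℕ) :
    (q ^ m - 1) * (q ^ n - 1) ≤ q ^ (m + n) - 1 :=
  calc (q ^ m - 1) * (q ^ n - 1) ≤ q ^ m * (q ^ n - 1) :=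
        mul_le_mul_of_nonneg_right (by linarith) (sub_nonneg.2 (one_le_pow₀ hq))
    _ ≤ q ^ (m + n) - 1 := pow_mul_pow_sub_one_le hq m n

lemma pow_sub_one_pos (hq : 1 < q) {k : ℕ} (hk : k ≠ 0) : 0 < q ^ k - 1 :=
  sub_pos.2 (one_lt_pow₀ hq hk)

lemma pow_mul_pow_sub_one_mul_pow_sub_one_le (hq : 1 ≤ q) (k n d : ℕ) :
    q ^ k * ((q ^ n - 1) * (q ^ d - 1)) ≤ q ^ (k + (n + d)) - 1 :=
  calc q ^ k * ((q ^ n - 1) * (q ^ d - 1)) ≤ q ^ k * (q ^ (n + d) - 1) :=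
        mul_le_mul_of_nonneg_left (pow_sub_one_mul_pow_sub_one_le hq n d)
          (pow_nonneg (by linarith) k)
    _ ≤ q ^ (k + (n + d)) - 1 := pow_mul_pow_sub_one_le hq k (n + d)

end PowerInequalities

lemma pow_sub_one_div_mul_div_lt {F : Type*} [Field F] [LinearOrder F] [IsStrictOrderedRing F]
    {q : F} (hq : 2 ≤ q) {y n d t m : ℕ} (hy : y ≠ 0) (hn : n ≠ 0) (hd : d ≠ 0)
    (hm : t + 1 + (n + d) ≤ m) :
    (q ^ (y + t) - 1) / (q ^ y - 1) * ((q ^ n - 1) / (q - 1)) < (q ^ m - 1) / (q ^ d - 1) := by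
  have hq_one : 1 < q := by linarith
  have hy_pos := pow_sub_one_pos hq_one hy
  have hn_pos := pow_sub_one_pos hq_one hn
  have hd_pos := pow_sub_one_pos hq_one hd
  have first_factor_lt : (q ^ (y + t) - 1) / (q ^ y - 1) < q ^ (t + 1) :=
    (div_lt_iff₀ hy_pos).2 (pow_add_sub_one_lt_pow_mul hq hy t)
  have second_factor_le : (q ^ n - 1) / (q - 1) ≤ q ^ n - 1 :=
    div_le_self hn_pos.le (by linarith)
  calc (q ^ (y + t) - 1) / (q ^ y - 1) * ((q ^ n - 1) / (q - 1))
      < q ^ (t + 1) * ((q ^ n - 1) / (q - 1)) :=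
        mul_lt_mul_of_pos_right first_factor_lt (div_pos hn_pos (sub_pos.2 hq_one))
    _ ≤ q ^ (t + 1) * (q ^ n - 1) :=
        mul_le_mul_of_nonneg_left second_factor_le (pow_nonneg (by linarith) _)
    _ ≤ (q ^ (t + 1 + (n + d)) - 1) / (q ^ d - 1) := by
        rw [le_div_iff₀ hd_pos, mul_assoc]
        exact pow_mul_pow_sub_one_mul_pow_sub_one_le hq_one.le (t + 1) n d
    _ ≤ (q ^ m - 1) / (q ^ d - 1) :=
        div_le_div_of_nonneg_right (sub_le_sub_right (pow_le_pow_right₀ hq_one.le hm) 1) hd_pos.le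

lemma natCast_zpow_sub_one_pos {q : ℕ} (hq : 1 < q) {z : ℤ} (hz : 0 < z) : 0 < (q : ℚ) ^ z - 1 :=
  sub_pos.2 (one_lt_zpow₀ (Nat.one_lt_cast.2 hq) hz)

lemma gaussBinom_pos {q n k : ℕ} (hq : 1 < q) (hkn : k ≤ n) : 0 < gaussBinom q n k := by
  refine prod_pos fun i hi ↦ ?_
  have hik := mem_range.1 hi
  exact div_pos (natCast_zpow_sub_one_pos hq (by lia)) (natCast_zpow_sub_one_pos hq (by lia))

lemma gaussBinom_one_right (q n : ℕ) : gaussBinom q n 1 = ((q : ℚ) ^ n - 1) / (q - 1) := by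
  simp [gaussBinom]

lemma gaussBinom_succ {q n k : ℕ} (hq : 1 < q) (hkn : k ≤ n) :
    gaussBinom q (n + 1) k =
      gaussBinom q n k * (((q : ℚ) ^ (n + 1) - 1) / ((q : ℚ) ^ (n + 1 - k) - 1)) := by
  have hden : (q : ℚ) ^ (n + 1 - k) - 1 ≠ 0 :=
    (pow_sub_one_pos (Nat.one_lt_cast.2 hq) (by lia)).ne'
  have numerators : (∏ i ∈ range k, ((q : ℚ) ^ (((n + 1 : ℕ) : ℤ) - i) - 1)) *
      ((q : ℚ) ^ (n + 1 - k) - 1) =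
      (∏ i ∈ range k, ((q : ℚ) ^ ((n : ℤ) - i) - 1)) * ((q : ℚ) ^ (n + 1) - 1) := by
    have peel_last := prod_range_succ (fun i : ℕ ↦ (q : ℚ) ^ (((n + 1 : ℕ) : ℤ) - i) - 1) k
    have peel_first := prod_range_succ' (fun i : ℕ ↦ (q : ℚ) ^ (((n + 1 : ℕ) : ℤ) - i) - 1) k
    rw [peel_last, ← Nat.cast_sub (by lia)] at peel_first
    simpa [← zpow_natCast] using peel_first
  rw [← mul_div_assoc, eq_div_iff hden]
  simp only [gaussBinom, prod_div_distrib, div_mul_eq_mul_div, numerators]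

lemma Nprime_pos {q m ν : ℕ} (hq : 1 < q) (hmν : m ≤ ν) (a : ℕ) : 0 < Nprime q a m ν := by
  refine prod_pos fun i hi ↦ ?_
  have hi_one := (mem_Icc.1 hi).1
  exact div_pos (natCast_zpow_sub_one_pos hq (by lia)) (natCast_zpow_sub_one_pos hq (by lia))

lemma Nprime_eq_Nprime_succ_mul {q a m ν : ℕ} (ham : a < m) (hmν : m ≤ ν) :
    Nprime q a m ν =
      Nprime q (a + 1) m ν * (((q : ℚ) ^ (2 * (ν - a)) - 1) / ((q : ℚ) ^ (m - a) - 1)) := by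
  have hlen : m - a = m - (a + 1) + 1 := by lia
  have hexp : 2 * ((ν : ℤ) - m + (m - a : ℕ)) = (2 * (ν - a) : ℕ) := by lia
  rw [Nprime, hlen, prod_Icc_succ_top (by lia), ← hlen, hexp, zpow_natCast, zpow_natCast, Nprime]

theorem stmt_9_general {q ν b n t x : ℕ} (hq : 2 ≤ q) (hn : n ≠ 0) (htx : t ≤ x) (hxb : x < b)
    (hbν : b ≤ ν) (hdim : b + x + n + t + 1 ≤ 2 * ν) :
    gaussBinom q (x + 1) t * gaussBinom q n 1 ^ (x + 1 - t) * Nprime q (x + 1) b ν <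
      gaussBinom q x t * gaussBinom q n 1 ^ (x - t) * Nprime q x b ν := by
  have ratio_lt : ((q : ℚ) ^ (x + 1) - 1) / ((q : ℚ) ^ (x + 1 - t) - 1) * gaussBinom q n 1 <
      ((q : ℚ) ^ (2 * (ν - x)) - 1) / ((q : ℚ) ^ (b - x) - 1) := by
    have h := pow_sub_one_div_mul_div_lt (q := (q : ℚ)) (y := x + 1 - t) (n := n) (d := b - x)
      (t := t) (m := 2 * (ν - x)) (Nat.ofNat_le_cast.2 hq) (by lia) hn (by lia) (by lia)
    rwa [Nat.sub_add_cancel (by lia), ← gaussBinom_one_right] at h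
  have common_pos : 0 < gaussBinom q x t * gaussBinom q n 1 ^ (x - t) * Nprime q (x + 1) b ν :=
    mul_pos (mul_pos (gaussBinom_pos hq htx) (pow_pos (gaussBinom_pos hq (by lia)) _))
      (Nprime_pos hq hbν _)
  calc gaussBinom q (x + 1) t * gaussBinom q n 1 ^ (x + 1 - t) * Nprime q (x + 1) b ν
      = gaussBinom q x t * gaussBinom q n 1 ^ (x - t) * Nprime q (x + 1) b ν *
          (((q : ℚ) ^ (x + 1) - 1) / ((q : ℚ) ^ (x + 1 - t) - 1) * gaussBinom q n 1) := by
        rw [gaussBinom_succ hq htx, Nat.sub_add_comm htx, pow_succ]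
        ring
    _ < gaussBinom q x t * gaussBinom q n 1 ^ (x - t) * Nprime q (x + 1) b ν *
          (((q : ℚ) ^ (2 * (ν - x)) - 1) / ((q : ℚ) ^ (b - x) - 1)) :=
        mul_lt_mul_of_pos_left ratio_lt common_pos
    _ = gaussBinom q x t * gaussBinom q n 1 ^ (x - t) * Nprime q x b ν := by
        rw [Nprime_eq_Nprime_succ_mul hxb hbν, mul_assoc]

theorem stmt_9
    (q ν b c t : ℕ) (hq : IsPrimePow q)
    (hν : 0 < ν) (ht : 0 < t) (hc : t ≤ c) (hb : t + 1 ≤ b) (hbν : b < ν)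
    (hdim : 2 * b + c + 1 ≤ 2 * ν) :
    ∀ x : ℕ, t ≤ x → x < b →
      gaussBinom q (x + 1) t * gaussBinom q (c - t + 1) 1 ^ (x + 1 - t) *
          Nprime q (x + 1) b ν <
        gaussBinom q x t * gaussBinom q (c - t + 1) 1 ^ (x - t) *
          Nprime q x b ν :=
  fun _ htx hxb ↦ stmt_9_general hq.two_le (by lia) htx hxb hbν.le (by lia)

end
end

section
/- Let q be a prime power and let ν, m₁, m₂, t be positive integers with ν > m₁ ≥ t and ν > m₂ ≥ t. Suppose ℱ₁ ⊆ 𝒫_{m₁} and ℱ₂ ⊆ 𝒫_{m₂} are nonempty maximal cross t-intersecting families. For i ∈ {1,2}, let 𝒮ᵢ be the set of all t-covers of ℱᵢ of dimension τ_t(ℱᵢ). Then 𝒮₁ and 𝒮₂ are cross t-intersecting, i.e., dim(S₁ ∩ S₂) ≥ t for all S₁ ∈ 𝒮₁ and S₂ ∈ 𝒮₂. -/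
open Finset Module

noncomputable section

variable {K V : Type*} [Field K] [AddCommGroup V] [Module K V]

/-!
Since `S₂` has dimension at most `m₁` (every member of `ℱ₁` is a `t`-cover of `ℱ₂`), it extends to a
totally isotropic `B` of dimension exactly `m₁`, and `B` can be chosen so that `S₁ ∩ B ⊆ S₂`. As `B`
still covers `ℱ₂`, maximality puts it in `ℱ₁`, so `S₁` meets `B`, hence `S₂`, in dimension at least
`t`.

The extension is built one vector at a time. The new vector must lie in `Bᗮ` but not in `B + S₁`. If
there were none, then `Bᗮ = B + (S₁ ∩ Bᗮ)` would be totally isotropic, hence of dimension at most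
`ν`, whereas `dim B < ν` gives `dim Bᗮ > ν`.
-/

section ModularLattice

variable {α : Type*} [Lattice α] [IsModularLattice α] [OrderBot α] {a b s : α}

theorem inf_sup_le_of_disjoint_sup (h : Disjoint (b ⊔ s) a) : s ⊓ (b ⊔ a) ≤ b :=
  calc s ⊓ (b ⊔ a) ≤ (b ⊔ s) ⊓ (b ⊔ a) := inf_le_inf_right _ le_sup_right
    _ = b ⊔ a ⊓ (b ⊔ s) := by rw [inf_comm, sup_inf_assoc_of_le a le_sup_left]
    _ = b := by rw [h.symm.eq_bot, sup_bot_eq]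

end ModularLattice

section TotallyIsotropic

variable {f : LinearMap.BilinForm K V} {B S T U W : Submodule K V} {m : ℕ}

theorem totallyIsotropic_iff_le_orthogonal : TotallyIsotropic f W ↔ W ≤ f.orthogonal W :=
  ⟨fun h y hy x hx => h x hx y hy, fun h x hx _ hy => h hy x hx⟩

theorem TotallyIsotropic.mono (hW : TotallyIsotropic f W) (hUW : U ≤ W) : TotallyIsotropic f U :=
  fun x hx y hy => hW x (hUW hx) y (hUW hy)

theorem totallyIsotropic_span_singleton (hf : f.IsAlt) (v : V) :
    TotallyIsotropic f (K ∙ v) := by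
  intro x hx y hy
  obtain ⟨a, rfl⟩ := Submodule.mem_span_singleton.1 hx
  obtain ⟨b, rfl⟩ := Submodule.mem_span_singleton.1 hy
  simp [hf.self_eq_zero v]

theorem TotallyIsotropic.sup (hf : f.IsRefl) (hU : TotallyIsotropic f U)
    (hW : TotallyIsotropic f W) (hWU : W ≤ f.orthogonal U) : TotallyIsotropic f (U ⊔ W) := by
  intro x hx y hy
  obtain ⟨u, hu, w, hw, rfl⟩ := Submodule.mem_sup.1 hx
  obtain ⟨u', hu', w', hw', rfl⟩ := Submodule.mem_sup.1 hy
  have huw' : f u w' = 0 := hWU hw' u hu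
  have hwu' : f w u' = 0 := hf u' w (hWU hw u' hu')
  simp [hU u hu u' hu', hW w hw w' hw', huw', hwu']

variable [FiniteDimensional K V]

theorem TotallyIsotropic.two_mul_finrank_le (hnd : f.Nondegenerate) (hW : TotallyIsotropic f W) :
    2 * finrank K W ≤ finrank K V := by
  have hle : finrank K W ≤ finrank K V - finrank K W :=
    f.finrank_orthogonal hnd W ▸
      Submodule.finrank_mono (totallyIsotropic_iff_le_orthogonal.1 hW)
  have := W.finrank_le
  omega

theorem exists_mem_orthogonal_notMem_sup (hf : f.IsRefl) (hnd : f.Nondegenerate)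
    (hS : TotallyIsotropic f S) (hB : TotallyIsotropic f B)
    (hdim : 2 * finrank K B < finrank K V) : ∃ v ∈ f.orthogonal B, v ∉ B ⊔ S := by
  by_contra! hsub
  have hdecomp : f.orthogonal B = B ⊔ S ⊓ f.orthogonal B := by
    rw [← sup_inf_assoc_of_le S (totallyIsotropic_iff_le_orthogonal.1 hB)]
    exact (inf_eq_right.2 hsub).symm
  have hiso : TotallyIsotropic f (f.orthogonal B) :=
    hdecomp ▸ hB.sup hf (hS.mono inf_le_left) inf_le_right
  have hle := hiso.two_mul_finrank_le hnd
  rw [f.finrank_orthogonal hnd] at hle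
  omega

theorem exists_mem_polar_inf_le (hf : f.IsAlt) (hnd : f.Nondegenerate)
    (hS : TotallyIsotropic f S) (hT : TotallyIsotropic f T) (hTm : finrank K T ≤ m)
    (hm : 2 * m ≤ finrank K V) : ∃ B ∈ polar f m, T ≤ B ∧ S ⊓ B ≤ T := by
  induction m, hTm using Nat.le_induction with
  | base => exact ⟨T, ⟨hT, rfl⟩, le_rfl, inf_le_right⟩
  | succ m _ ih =>
    obtain ⟨B, ⟨hB, hBm⟩, hTB, hSB⟩ := ih (by omega)
    obtain ⟨v, hv, hvBS⟩ := exists_mem_orthogonal_notMem_sup hf.isRefl hnd hS hB (by omega)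
    have hvB : v ∉ B := fun h => hvBS (Submodule.mem_sup_left h)
    have hiso : TotallyIsotropic f (B ⊔ K ∙ v) :=
      hB.sup hf.isRefl (totallyIsotropic_span_singleton hf v)
        ((Submodule.span_singleton_le_iff_mem v _).2 hv)
    have hdim : finrank K ↥(B ⊔ K ∙ v) = m + 1 := by
      rw [Submodule.finrank_sup_span_singleton hvB, hBm]
    have hinf : S ⊓ (B ⊔ K ∙ v) ≤ B :=
      inf_sup_le_of_disjoint_sup (Submodule.disjoint_span_singleton_of_notMem hvBS)
    exact ⟨B ⊔ K ∙ v, ⟨hiso, hdim⟩, hTB.trans le_sup_left, (le_inf inf_le_left hinf).trans hSB⟩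

end TotallyIsotropic

section Cover

variable {f : LinearMap.BilinForm K V} {ℱ ℱ₁ ℱ₂ : Set (Submodule K V)} {X Y : Submodule K V}
  {m₁ m₂ t : ℕ}

theorem IsTCover.tauCover_le_finrank (hX : IsTCover f t ℱ X) : tauCover f t ℱ ≤ finrank K X :=
  Nat.sInf_le ⟨X, hX, rfl⟩

theorem IsTCover.of_le [FiniteDimensional K V] (hX : IsTCover f t ℱ X) (hXY : X ≤ Y)
    (hY : TotallyIsotropic f Y) : IsTCover f t ℱ Y :=
  ⟨hY, fun F hF => (hX.2 F hF).trans (Submodule.finrank_mono (inf_le_inf_right F hXY))⟩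

theorem mem_of_isTCover_of_maximal (h₁ : ℱ₁ ⊆ polar f m₁) (h₂ : ℱ₂ ⊆ polar f m₂)
    (hcross : ∀ F₁ ∈ ℱ₁, ∀ F₂ ∈ ℱ₂, t ≤ finrank K ↥(F₁ ⊓ F₂))
    (hmax : ∀ 𝒢₁ 𝒢₂ : Set (Submodule K V), 𝒢₁ ⊆ polar f m₁ → 𝒢₂ ⊆ polar f m₂ →
      (∀ G₁ ∈ 𝒢₁, ∀ G₂ ∈ 𝒢₂, t ≤ finrank K ↥(G₁ ⊓ G₂)) →
      ℱ₁ ⊆ 𝒢₁ → ℱ₂ ⊆ 𝒢₂ → 𝒢₁ = ℱ₁ ∧ 𝒢₂ = ℱ₂)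
    (hXm : X ∈ polar f m₁) (hX : IsTCover f t ℱ₂ X) : X ∈ ℱ₁ := by
  have hinsert : insert X ℱ₁ = ℱ₁ :=
    (hmax (insert X ℱ₁) ℱ₂ (Set.insert_subset hXm h₁) h₂
      (Set.forall_mem_insert.2 ⟨hX.2, hcross⟩) (Set.subset_insert X ℱ₁) subset_rfl).1
  exact Set.insert_eq_self.1 hinsert

end Cover

theorem stmt_10_general [FiniteDimensional K V] {f : LinearMap.BilinForm K V} {m t : ℕ}
    {ℱ₁ ℱ₂ : Set (Submodule K V)} {S₁ S₂ : Submodule K V} (hf : f.IsAlt) (hnd : f.Nondegenerate)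
    (hm : 2 * m ≤ finrank K V) (hsat : ∀ F ∈ polar f m, IsTCover f t ℱ₂ F → F ∈ ℱ₁)
    (hS₁ : IsTCover f t ℱ₁ S₁) (hS₂ : IsTCover f t ℱ₂ S₂) (hS₂m : finrank K S₂ ≤ m) :
    t ≤ finrank K ↥(S₁ ⊓ S₂) := by
  obtain ⟨B, hB, hS₂B, hinf⟩ := exists_mem_polar_inf_le hf hnd hS₁.1 hS₂.1 hS₂m hm
  have hBmem : B ∈ ℱ₁ := hsat B hB (hS₂.of_le hS₂B hB.1)
  exact (hS₁.2 B hBmem).trans (Submodule.finrank_mono (le_inf inf_le_left hinf))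

theorem stmt_10
    (q ν m₁ m₂ t : ℕ) (hq : IsPrimePow q)
    {K : Type} [Field K] [Fintype K] (hK : Fintype.card K = q)
    (f : (Fin (2 * ν) → K) →ₗ[K] (Fin (2 * ν) → K) →ₗ[K] K)
    (halt : ∀ v, f v v = 0)
    (hnd : ∀ v, (∀ w, f v w = 0) → v = 0)
    (ht : 0 < t) (hm₁ : t ≤ m₁) (hm₂ : t ≤ m₂) (hm₁ν : m₁ < ν) (hm₂ν : m₂ < ν)
    (ℱ₁ ℱ₂ : Set (Submodule K (Fin (2 * ν) → K)))
    (h1ne : ℱ₁.Nonempty) (h2ne : ℱ₂.Nonempty)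
    (h1 : ℱ₁ ⊆ polar f m₁) (h2 : ℱ₂ ⊆ polar f m₂)
    (hcross : ∀ F₁ ∈ ℱ₁, ∀ F₂ ∈ ℱ₂, t ≤ finrank K ↥(F₁ ⊓ F₂))
    (hmax : ∀ 𝒢₁ 𝒢₂ : Set (Submodule K (Fin (2 * ν) → K)),
      𝒢₁ ⊆ polar f m₁ → 𝒢₂ ⊆ polar f m₂ →
      (∀ G₁ ∈ 𝒢₁, ∀ G₂ ∈ 𝒢₂, t ≤ finrank K ↥(G₁ ⊓ G₂)) →
      ℱ₁ ⊆ 𝒢₁ → ℱ₂ ⊆ 𝒢₂ → 𝒢₁ = ℱ₁ ∧ 𝒢₂ = ℱ₂) :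
    ∀ S₁ S₂ : Submodule K (Fin (2 * ν) → K),
      IsTCover f t ℱ₁ S₁ → finrank K S₁ = tauCover f t ℱ₁ →
      IsTCover f t ℱ₂ S₂ → finrank K S₂ = tauCover f t ℱ₂ →
      t ≤ finrank K ↥(S₁ ⊓ S₂) := by
  intro S₁ S₂ hS₁ _ hS₂ hS₂τ
  obtain ⟨F, hF⟩ := h1ne
  have hFcover : IsTCover f t ℱ₂ F := ⟨(h1 hF).1, hcross F hF⟩
  have hS₂m : finrank K S₂ ≤ m₁ :=
    hS₂τ.trans_le (hFcover.tauCover_le_finrank.trans_eq (h1 hF).2)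
  have hf : LinearMap.BilinForm.IsAlt f := halt
  exact stmt_10_general hf (hf.isRefl.nondegenerate_iff_separatingLeft.2 hnd)
    (by rw [finrank_fin_fun]; omega)
    (fun _ => mem_of_isTCover_of_maximal h1 h2 hcross hmax) hS₁ hS₂ hS₂m

end
end
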